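/- For integers D ≥ 1, b ≥ 2, and n ≥ 4D(b-1), the number |E₁(b,N)| of 2-weight-limited b-bursts in the L₁ model on [n]^D satisfies |E₁(b,N)| ≥ (1/4)·n^D·2^{b-1}·C(D,b-1) if D ≥ b-1, and |E₁(b,N)| ≥ (1/4)·n^D·2^D·C(b-1,D) if D < b-1. -/

import Mathlib

open Finset in
lemma aux_pairs (n b D : ℕ) (hb : 2 ≤ b) :
    (Finset.univ.filter (fun p : (Fin D → Fin n) × (Fin D → Fin n) => p.1 ≠ p.2 ∧
      ∑ t : Fin D, |((p.1 t : ℕ) : ℤ) - ((p.2 t : ℕ) : ℤ)| < (b : ℤ))).card ≤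
    2 * Nat.card {e : (Fin D → Fin n) → ZMod 2 |
          (Finset.univ.filter (fun i => e i ≠ 0)).card ≤ 2 ∧
          ∀ i ∈ Finset.univ.filter (fun i => e i ≠ 0),
            ∀ j ∈ Finset.univ.filter (fun i => e i ≠ 0),
              ∑ t : Fin D, |((i t : ℕ) : ℤ) - ((j t : ℕ) : ℤ)| < (b : ℤ)} := by
  classical
  set E := {e : (Fin D → Fin n) → ZMod 2 |
          (Finset.univ.filter (fun i => e i ≠ 0)).card ≤ 2 ∧
          ∀ i ∈ Finset.univ.filter (fun i => e i ≠ 0),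
            ∀ j ∈ Finset.univ.filter (fun i => e i ≠ 0),
              ∑ t : Fin D, |((i t : ℕ) : ℤ) - ((j t : ℕ) : ℤ)| < (b : ℤ)} with hE
  have hc : Nat.card E = E.toFinset.card := by
    rw [Set.toFinset_card, Nat.card_eq_fintype_card]
  rw [hc]
  let F : (Fin D → Fin n) × (Fin D → Fin n) → ((Fin D → Fin n) → ZMod 2) :=
    fun p k => if k = p.1 ∨ k = p.2 then 1 else 0
  have hF : ∀ p k, F p k ≠ 0 ↔ (k = p.1 ∨ k = p.2) := by
    intro p k
    simp only [F]
    split_ifs with h <;> simp [h]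
  refine Finset.card_le_mul_card_image_of_maps_to (f := F) ?_ 2 ?_
  · rintro ⟨i, j⟩ hp
    simp only [mem_filter, mem_univ, true_and] at hp
    obtain ⟨hne, hd⟩ := hp
    rw [Set.mem_toFinset, hE, Set.mem_ofPred_eq]
    constructor
    · refine le_trans (Finset.card_le_card (t := {i, j}) ?_) Finset.card_le_two
      intro k hk
      simpa [hF] using hk
    · intro k hk l hl
      rw [mem_filter, hF] at hk hl
      have h0 : (0 : ℤ) < b := by omega
      have hd' : ∑ t : Fin D, |((j t : ℕ) : ℤ) - ((i t : ℕ) : ℤ)| < (b : ℤ) := by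
        simpa only [abs_sub_comm] using hd
      rcases hk.2 with rfl | rfl <;> rcases hl.2 with rfl | rfl <;> simp_all
  · intro e _
    by_cases hne : ∃ p : (Fin D → Fin n) × (Fin D → Fin n), p.1 ≠ p.2 ∧ F p = e
    · obtain ⟨p, hp, rfl⟩ := hne
      refine le_trans (Finset.card_le_card (t := {p, p.swap}) ?_) Finset.card_le_two
      intro q hq
      simp only [mem_filter, mem_univ, true_and] at hq
      obtain ⟨⟨hq1, -⟩, hq2⟩ := hq
      have key : ∀ k, (k = q.1 ∨ k = q.2) ↔ (k = p.1 ∨ k = p.2) := by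
        intro k
        rw [← hF, ← hF, hq2]
      have h1 := key q.1
      have h2 := key q.2
      rw [mem_insert, mem_singleton, Prod.ext_iff, Prod.ext_iff, Prod.fst_swap, Prod.snd_swap]
      grind
    · rw [Finset.filter_eq_empty_iff.2]
      · simp
      · intro p hp he
        simp only [mem_filter, mem_univ, true_and] at hp
        exact hne ⟨p, hp.1, he⟩

open Finset in
lemma aux_inj (n b D : ℕ) (hb : 2 ≤ b) (S : Finset (Fin D → ℤ)) (h0 : ∀ d ∈ S, d ≠ 0)
    (hS : ∀ d ∈ S, ∑ t, |d t| < (b : ℤ)) :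
    (n - 2 * (b - 1)) ^ D * S.card ≤
    (Finset.univ.filter (fun p : (Fin D → Fin n) × (Fin D → Fin n) => p.1 ≠ p.2 ∧
      ∑ t : Fin D, |((p.1 t : ℕ) : ℤ) - ((p.2 t : ℕ) : ℤ)| < (b : ℤ))).card := by
  classical
  set k := n - 2 * (b - 1) with hk
  have hcard : k ^ D * S.card = ((univ : Finset (Fin D → Fin k)) ×ˢ S).card := by
    rw [card_product]; simp
  rw [hcard]
  by_cases hn0 : n = 0 ∧ 0 < D
  · obtain ⟨hn0, hD0⟩ := hn0
    have : IsEmpty (Fin D → Fin k) := ⟨fun x => by have := (x ⟨0, hD0⟩).2; omega⟩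
    simp
  have hcoord : ∀ d ∈ S, ∀ t, |d t| < (b : ℤ) := fun d hd t =>
    lt_of_le_of_lt (Finset.single_le_sum (f := fun t => |d t|) (fun _ _ => abs_nonneg _)
      (mem_univ t)) (hS d hd)
  have hpos : ∀ _ : Fin D, 0 < n := fun t => by
    have := t.2
    by_contra h
    exact hn0 ⟨by omega, by omega⟩
  let G : (Fin D → Fin k) × (Fin D → ℤ) → (Fin D → Fin n) × (Fin D → Fin n) := fun p =>
    (fun t => ⟨((p.1 t : ℕ) + (b - 1)) % n, Nat.mod_lt _ (hpos t)⟩,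
     fun t => ⟨((((p.1 t : ℕ) + (b - 1) : ℕ) : ℤ) + p.2 t).toNat % n, Nat.mod_lt _ (hpos t)⟩)
  have hG1 : ∀ p ∈ ((univ : Finset (Fin D → Fin k)) ×ˢ S), ∀ t,
      ((((G p).1 t : ℕ) : ℤ) = (p.1 t : ℕ) + ((b : ℤ) - 1)) := by
    intro p hp t
    have := (p.1 t).2
    simp only [G]
    rw [Nat.mod_eq_of_lt (by omega)]
    omega
  have hG2 : ∀ p ∈ ((univ : Finset (Fin D → Fin k)) ×ˢ S), ∀ t,
      ((((G p).2 t : ℕ) : ℤ) = (p.1 t : ℕ) + ((b : ℤ) - 1) + p.2 t) := by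
    intro p hp t
    have := (p.1 t).2
    have h2 := abs_lt.1 (hcoord p.2 (mem_product.1 hp).2 t)
    simp only [G]
    rw [Nat.mod_eq_of_lt (by omega)]
    omega
  refine Finset.card_le_card_of_injOn G ?_ ?_
  · intro p hp
    have hp' := (mem_product.1 hp).2
    simp only [coe_filter, mem_univ, true_and, Set.mem_ofPred_eq]
    constructor
    · intro h
      apply h0 _ hp'
      funext t
      have e1 := hG1 p hp t
      have e2 := hG2 p hp t
      rw [h] at e1
      simp only [Pi.zero_apply]
      omega
    · convert hS _ hp' using 2 with t
      rw [hG1 p hp t, hG2 p hp t, ← abs_neg]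
      congr 1
      ring
  · intro p hp q hq h
    have e : ∀ t, (p.1 t = q.1 t) ∧ p.2 t = q.2 t := by
      intro t
      have a1 := hG1 p hp t
      have a2 := hG2 p hp t
      have b1 := hG1 q hq t
      have b2 := hG2 q hq t
      rw [h] at a1 a2
      constructor
      · apply Fin.ext
        omega
      · omega
    exact Prod.ext (funext fun t => (e t).1) (funext fun t => (e t).2)

lemma aux_bern (n m D : ℕ) (hD : 1 ≤ D) (hm : 1 ≤ m) (hn : 4 * D * m ≤ n) :
    (n : ℚ) ^ D ≤ 2 * (((n - 2 * m : ℕ) : ℚ)) ^ D := by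
  have h4 : 4 * m ≤ n := by nlinarith
  have hnpos : (0 : ℚ) < n := by
    have : 0 < n := by omega
    exact_mod_cast this
  have hnq : 4 * (D : ℚ) * m ≤ n := by exact_mod_cast hn
  have h4q : 4 * (m : ℚ) ≤ n := by exact_mod_cast h4
  have hx : (2 * (m : ℚ)) / n ≤ 1 / 2 := by
    rw [div_le_iff₀ hnpos]; linarith
  have hb := one_add_mul_le_pow (a := -(2 * (m : ℚ) / n)) (by linarith) D
  have hDx : (D : ℚ) * (2 * (m : ℚ) / n) ≤ 1 / 2 := by
    rw [← mul_div_assoc, div_le_iff₀ hnpos]; linarith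
  have he : (((n - 2 * m : ℕ) : ℚ)) = n * (1 + -(2 * (m : ℚ) / n)) := by
    rw [Nat.cast_sub (by omega)]
    push_cast
    field_simp
    ring
  rw [he, mul_pow]
  have hp : (0 : ℚ) < (n : ℚ) ^ D := by positivity
  nlinarith

lemma aux_main (n b D : ℕ) (hb : 2 ≤ b) (hD : 1 ≤ D)
    (hn : 4 * D * (b - 1) ≤ n) (S : Finset (Fin D → ℤ)) (h0 : ∀ d ∈ S, d ≠ 0)
    (hS : ∀ d ∈ S, ∑ t, |d t| < (b : ℤ)) :
    (1 / 4) * (n : ℚ) ^ D * (S.card : ℚ) ≤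
     (Nat.card {e : (Fin D → Fin n) → ZMod 2 |
          (Finset.univ.filter (fun i => e i ≠ 0)).card ≤ 2 ∧
          ∀ i ∈ Finset.univ.filter (fun i => e i ≠ 0),
            ∀ j ∈ Finset.univ.filter (fun i => e i ≠ 0),
              ∑ t : Fin D, |((i t : ℕ) : ℤ) - ((j t : ℕ) : ℤ)| < (b : ℤ)} : ℚ) := by
  have h1 := (aux_inj n b D hb S h0 hS).trans (aux_pairs n b D hb)
  have h2 := aux_bern n (b - 1) D hD (by omega) hn
  generalize Nat.card _ = c at h1 ⊢
  have h1q : (((n - 2 * (b - 1) : ℕ) : ℚ)) ^ D * (S.card : ℚ) ≤ 2 * (c : ℚ) := by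
    exact_mod_cast h1
  have h3 := mul_le_mul_of_nonneg_right h2 (Nat.cast_nonneg (α := ℚ) S.card)
  linarith

open Finset in
lemma aux_S1 (m D : ℕ) (hm : 1 ≤ m) : ∃ S : Finset (Fin D → ℤ), (∀ d ∈ S, d ≠ 0) ∧
    (∀ d ∈ S, ∑ t, |d t| < ((m + 1 : ℕ) : ℤ)) ∧ S.card = 2 ^ m * D.choose m := by
  classical
  let T : Finset (Σ _ : Finset (Fin D), Finset (Fin D)) :=
    (powersetCard m univ).sigma (fun A => A.powerset)
  let f : (Σ _ : Finset (Fin D), Finset (Fin D)) → (Fin D → ℤ) :=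
    fun p t => if t ∈ p.1 then (if t ∈ p.2 then 1 else -1) else 0
  have habs : ∀ p t, |f p t| = if t ∈ p.1 then 1 else 0 := by
    intro p t
    simp only [f]
    split_ifs <;> simp
  have hsum : ∀ p ∈ T, ∑ t, |f p t| = (m : ℤ) := by
    intro p hp
    simp only [T, mem_sigma, mem_powersetCard] at hp
    simp only [habs]
    simp [hp.1.2]
  refine ⟨T.image f, ?_, ?_, ?_⟩
  · intro d hd h
    obtain ⟨p, hp, rfl⟩ := mem_image.1 hd
    have := hsum p hp
    rw [h] at this
    simp at this
    omega
  · intro d hd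
    obtain ⟨p, hp, rfl⟩ := mem_image.1 hd
    rw [hsum p hp]
    push_cast
    omega
  · rw [card_image_of_injOn]
    · simp only [T, card_sigma, card_powerset]
      rw [sum_congr rfl (g := fun _ => 2 ^ m)]
      · simp [mul_comm]
      · intro A hA
        rw [(mem_powersetCard.1 hA).2]
    · rintro ⟨A, B⟩ hp ⟨A', B'⟩ hq h
      simp only [T, coe_sigma, Set.mem_sigma_iff, mem_coe, mem_powerset] at hp hq
      have h1 : A = A' := by
        ext t
        have := congrFun h t
        simp only [f] at this
        grind
      have h2 : B = B' := by
        ext t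
        have := congrFun h t
        have := @hp.2 t
        have := @hq.2 t
        simp only [f] at *
        grind
      rw [h1, h2]

open Finset in
lemma aux_S2 (m D : ℕ) (hD : 1 ≤ D) (hm : D ≤ m) : ∃ S : Finset (Fin D → ℤ), (∀ d ∈ S, d ≠ 0) ∧
    (∀ d ∈ S, ∑ t, |d t| < ((m + 1 : ℕ) : ℤ)) ∧ S.card = 2 ^ D * m.choose D := by
  classical
  let T : Finset ((Fin (D + 1) →₀ ℕ) × Finset (Fin D)) :=
    (finsuppAntidiag univ (m - D)) ×ˢ univ
  let f : ((Fin (D + 1) →₀ ℕ) × Finset (Fin D)) → (Fin D → ℤ) :=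
    fun p t => if t ∈ p.2 then ((p.1 t.succ : ℤ) + 1) else -((p.1 t.succ : ℤ) + 1)
  have habs : ∀ p t, |f p t| = (p.1 t.succ : ℤ) + 1 := by
    intro p t
    have : (0 : ℤ) ≤ (p.1 t.succ : ℤ) + 1 := by positivity
    simp only [f]
    split_ifs
    · exact abs_of_nonneg this
    · rw [abs_neg]; exact abs_of_nonneg this
  have hT : ∀ p ∈ T, p.1 0 + ∑ t : Fin D, p.1 t.succ = m - D := by
    intro p hp
    simp only [T, mem_product, mem_finsuppAntidiag] at hp
    rw [← Fin.sum_univ_succ]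
    exact hp.1.1
  refine ⟨T.image f, ?_, ?_, ?_⟩
  · intro d hd h
    obtain ⟨p, hp, rfl⟩ := mem_image.1 hd
    have h1 := habs p ⟨0, hD⟩
    rw [h] at h1
    simp at h1
    omega
  · intro d hd
    obtain ⟨p, hp, rfl⟩ := mem_image.1 hd
    have h1 := hT p hp
    simp only [habs]
    rw [sum_add_distrib, ← Nat.cast_sum]
    simp
    rw [← Nat.cast_sum]
    omega
  · rw [card_image_of_injOn]
    · simp only [T, card_product]
      rw [card_finsuppAntidiag_nat_eq_choose]
      have : D + 1 + (m - D) - 1 = m := by omega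
      simp [this, mul_comm, Nat.choose_symm hm]
    · rintro ⟨g, B⟩ hp ⟨g', B'⟩ hq h
      have e : ∀ t : Fin D, g t.succ = g' t.succ := by
        intro t
        have h1 := habs (g, B) t
        have h2 := habs (g', B') t
        rw [h] at h1
        simp only at h1 h2
        omega
      have e0 : g 0 = g' 0 := by
        have h1 := hT _ hp
        have h2 := hT _ hq
        simp only at h1 h2
        rw [sum_congr rfl (fun t _ => e t)] at h1
        omega
      have hg : g = g' := by
        ext t
        refine Fin.cases e0 e t
      have hB : B = B' := by
        ext t
        have h1 := congrFun h t
        simp only [f] at h1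
        have := e t
        split_ifs at h1 <;> tauto
      rw [hg, hB]


/-- For integers `D ≥ 1`, `b ≥ 2` and `n ≥ 4D(b-1)`, the number of 2-weight-limited
`b`-bursts in the `L₁` model on `[n]^D` (binary vectors of Hamming weight at most 2
whose support positions are pairwise within `L₁` distance `< b`) satisfies
`|E₁(b,N)| ≥ (1/4) n^D 2^{b-1} C(D,b-1)` if `D ≥ b-1`, and
`|E₁(b,N)| ≥ (1/4) n^D 2^D C(b-1,D)` if `D < b-1`. -/
theorem stmt_11 (n b D : ℕ) (hb : 2 ≤ b) (hD : 1 ≤ D) (hbn : b ≤ n)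
    (hn : 4 * D * (b - 1) ≤ n) :
    (b - 1 ≤ D →
      (Nat.card {e : (Fin D → Fin n) → ZMod 2 |
          (Finset.univ.filter (fun i => e i ≠ 0)).card ≤ 2 ∧
          ∀ i ∈ Finset.univ.filter (fun i => e i ≠ 0),
            ∀ j ∈ Finset.univ.filter (fun i => e i ≠ 0),
              ∑ t : Fin D, |((i t : ℕ) : ℤ) - ((j t : ℕ) : ℤ)| < (b : ℤ)} : ℚ)
        ≥ (1 / 4) * (n : ℚ) ^ D * 2 ^ (b - 1) * (D.choose (b - 1) : ℚ)) ∧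
    (D < b - 1 →
      (Nat.card {e : (Fin D → Fin n) → ZMod 2 |
          (Finset.univ.filter (fun i => e i ≠ 0)).card ≤ 2 ∧
          ∀ i ∈ Finset.univ.filter (fun i => e i ≠ 0),
            ∀ j ∈ Finset.univ.filter (fun i => e i ≠ 0),
              ∑ t : Fin D, |((i t : ℕ) : ℤ) - ((j t : ℕ) : ℤ)| < (b : ℤ)} : ℚ)
        ≥ (1 / 4) * (n : ℚ) ^ D * 2 ^ D * ((b - 1).choose D : ℚ)) := by
  obtain ⟨m, rfl⟩ : ∃ m, b = m + 1 := ⟨b - 1, by omega⟩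
  constructor
  · intro h
    obtain ⟨S, h0, hS, hc⟩ := aux_S1 m D (by omega)
    have := aux_main n (m + 1) D hb hD hn S h0 hS
    rw [hc] at this
    simp only [Nat.add_sub_cancel, ge_iff_le]
    refine le_trans (le_of_eq ?_) this
    push_cast
    ring
  · intro h
    obtain ⟨S, h0, hS, hc⟩ := aux_S2 m D hD (by omega)
    have := aux_main n (m + 1) D hb hD hn S h0 hS
    rw [hc] at this
    simp only [Nat.add_sub_cancel, ge_iff_le]
    refine le_trans (le_of_eq ?_) this
    push_cast
    ring
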